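/- Let p ≥ 2 and let ℙ = ℤx₃ ∪ (x₂ + ℤx₃) ⊆ 𝕃(2,3,p). For every integer n, at least one of the four elements nω + ω, nω − x₁, nω − x₂, nω − x₃ of 𝕃 belongs to ℙ. -/

import Mathlib

/-- The relations subgroup of `ℤ³` defining `𝕃(2,3,p)`: generated by
`(2,-3,0)` and `(0,3,-p)`. -/
def Lrel (p : ℕ) : AddSubgroup (ℤ × ℤ × ℤ) :=
  AddSubgroup.closure {(2, -3, 0), (0, 3, -(p : ℤ))}

/-- The abelian group `𝕃(2,3,p)` with generators `x₁, x₂, x₃` and relations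
`2x₁ = 3x₂ = p x₃`. -/
abbrev Lgrp (p : ℕ) := (ℤ × ℤ × ℤ) ⧸ Lrel p

/-- The generator `x₁` of `𝕃(2,3,p)`. -/
def lx1 (p : ℕ) : Lgrp p := QuotientAddGroup.mk (1, 0, 0)

/-- The generator `x₂` of `𝕃(2,3,p)`. -/
def lx2 (p : ℕ) : Lgrp p := QuotientAddGroup.mk (0, 1, 0)

/-- The generator `x₃` of `𝕃(2,3,p)`. -/
def lx3 (p : ℕ) : Lgrp p := QuotientAddGroup.mk (0, 0, 1)

/-- The canonical element `c = p x₃`. -/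
def lc (p : ℕ) : Lgrp p := (p : ℤ) • lx3 p

/-- The dualizing element `ω = c - x₁ - x₂ - x₃`. -/
def lw (p : ℕ) : Lgrp p := lc p - lx1 p - lx2 p - lx3 p

/-- The persistent subset `ℙ = ℤx₃ ∪ (x₂ + ℤx₃)` of `𝕃(2,3,p)`. -/
def Lpersistent (p : ℕ) : Set (Lgrp p) :=
  {y | ∃ m : ℤ, y = m • lx3 p ∨ y = lx2 p + m • lx3 p}

/-!
Since `2x₁` and `3x₂` are multiples of `x₃`, the quotient `𝕃 / ℤx₃` is
`ℤ/2 × ℤ/3 ≅ ℤ/6`, with `x₁ ↦ 3`, `x₂ ↦ 2` and `ω ↦ -3 - 2 = 1`. Membership in `ℙ` only depends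
on the image in this quotient, where it means being `0` or `2`. So the claim is that for every
`n ∈ ℤ/6` one of `n + 1`, `n - 3`, `n - 2`, `n` is `0` or `2`.
-/

namespace Lgrp

variable (p : ℕ)

theorem three_zsmul_lx2 : (3 : ℤ) • lx2 p = lc p := by
  have relation : ((0, 3, -p) : ℤ × ℤ × ℤ) ∈ Lrel p := AddSubgroup.subset_closure (by simp)
  rw [lc, lx2, lx3, ← QuotientAddGroup.mk_zsmul, ← QuotientAddGroup.mk_zsmul,
    QuotientAddGroup.eq_iff_sub_mem]
  simpa using relation

theorem two_zsmul_lx1 : (2 : ℤ) • lx1 p = lc p := by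
  have relation : ((2, -3, 0) : ℤ × ℤ × ℤ) ∈ Lrel p := AddSubgroup.subset_closure (by simp)
  rw [← three_zsmul_lx2, lx1, lx2, ← QuotientAddGroup.mk_zsmul, ← QuotientAddGroup.mk_zsmul,
    QuotientAddGroup.eq_iff_sub_mem]
  simpa using relation

theorem exists_eq_zsmul_add_zsmul_add_zsmul (y : Lgrp p) :
    ∃ a b c : ℤ, y = a • lx1 p + b • lx2 p + c • lx3 p := by
  obtain ⟨⟨a, b, c⟩, rfl⟩ := QuotientAddGroup.mk_surjective y
  refine ⟨a, b, c, ?_⟩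
  simp only [lx1, lx2, lx3, ← QuotientAddGroup.mk_zsmul, ← QuotientAddGroup.mk_add]
  simp

/-- The projection `𝕃 → 𝕃 / ℤx₃`, with the quotient identified with `ℤ/6` by
`x₁ ↦ 3`, `x₂ ↦ 2`, `x₃ ↦ 0`. It detects membership in `ℙ`. -/
def residue : Lgrp p →+ ZMod 6 :=
  QuotientAddGroup.lift (Lrel p)
    ((zmultiplesHom (ZMod 6) 3).coprod ((zmultiplesHom (ZMod 6) 2).coprod 0)) <| by
      rw [Lrel, AddSubgroup.closure_le]
      rintro _ (rfl | rfl)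
      · change (2 : ℤ) • (3 : ZMod 6) + ((-3 : ℤ) • (2 : ZMod 6) + 0) = 0
        decide
      · change (0 : ℤ) • (3 : ZMod 6) + ((3 : ℤ) • (2 : ZMod 6) + 0) = 0
        decide

@[simp]
theorem residue_lx1 : residue p (lx1 p) = 3 := by
  simp [residue, lx1]

@[simp]
theorem residue_lx2 : residue p (lx2 p) = 2 := by
  simp [residue, lx2]

@[simp]
theorem residue_lx3 : residue p (lx3 p) = 0 := by
  simp [residue, lx3]

@[simp]
theorem residue_lw : residue p (lw p) = 1 := by
  simp only [lw, lc, map_sub, map_zsmul, residue_lx1, residue_lx2, residue_lx3, smul_zero]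
  decide

theorem ker_residue : (residue p).ker = AddSubgroup.zmultiples (lx3 p) := by
  refine le_antisymm (fun y hy ↦ ?_) (by simp)
  obtain ⟨a, b, c, rfl⟩ := exists_eq_zsmul_add_zsmul_add_zsmul p y
  have six_dvd : (6 : ℤ) ∣ a * 3 + b * 2 := by
    refine (ZMod.intCast_zmod_eq_zero_iff_dvd _ 6).mp ?_
    simpa using hy
  obtain ⟨u, rfl⟩ : (2 : ℤ) ∣ a := by lia
  obtain ⟨v, rfl⟩ : (3 : ℤ) ∣ b := by lia
  refine AddSubgroup.mem_zmultiples_iff.mpr ⟨(u + v) * p + c, ?_⟩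
  have h₁ := two_zsmul_lx1 p
  have h₂ := three_zsmul_lx2 p
  rw [lc] at h₁ h₂
  linear_combination (norm := module) -u • h₁ - v • h₂

variable {p}

theorem mem_Lpersistent_iff_residue {y : Lgrp p} :
    y ∈ Lpersistent p ↔ residue p y = 0 ∨ residue p y = 2 := by
  have mem_multiples (z : Lgrp p) : residue p z = 0 ↔ ∃ m : ℤ, z = m • lx3 p := by
    rw [← AddMonoidHom.mem_ker, ker_residue, AddSubgroup.mem_zmultiples_iff]
    simp only [eq_comm]
  have mem_coset : residue p y = 2 ↔ ∃ m : ℤ, y = lx2 p + m • lx3 p := by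
    simp only [← sub_eq_iff_eq_add', ← mem_multiples, map_sub, residue_lx2, sub_eq_zero]
  rw [mem_multiples, mem_coset, ← exists_or]
  rfl

end Lgrp

/-- For every integer `n`, at least one of the four elements `nω + ω`, `nω − x₁`,
`nω − x₂`, `nω − x₃` of `𝕃(2,3,p)` belongs to the persistent subset
`ℙ = ℤx₃ ∪ (x₂ + ℤx₃)`. -/
theorem stmt_15 (p : ℕ) (hp : 2 ≤ p) (n : ℤ) :
    n • lw p + lw p ∈ Lpersistent p ∨
    n • lw p - lx1 p ∈ Lpersistent p ∨
    n • lw p - lx2 p ∈ Lpersistent p ∨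
    n • lw p - lx3 p ∈ Lpersistent p := by
  have cover : ∀ r : ZMod 6, (r + 1 = 0 ∨ r + 1 = 2) ∨ (r - 3 = 0 ∨ r - 3 = 2) ∨
      (r - 2 = 0 ∨ r - 2 = 2) ∨ (r = 0 ∨ r = 2) := by
    decide
  simpa only [Lgrp.mem_Lpersistent_iff_residue, map_add, map_sub, map_zsmul, Lgrp.residue_lw,
    Lgrp.residue_lx1, Lgrp.residue_lx2, Lgrp.residue_lx3, zsmul_one, sub_zero] using cover n
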